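/- Assume 3 ≤ a ≤ b and t ≥ p. Let x* = ((2p−5) − √((2p−5)² − 24))/12 and y* = p − (p+2)/p + 2((2a+2b−5)/p − 2)x* + (η − (16p−14a−14b+20)/p)x*². Then: (i) q_s(x*) ≤ y* for every block array s, with equality if and only if s ∈ Q₀ ∪ Q₁ ∪ Q₂ ∪ Q₃ ∪ Q₄; and (ii) for every real x ≠ x*, max_{s∈S} q_s(x) > y*. -/

import Mathlib

open Matrix

namespace TwoDim

/-- The set of plots of an `a × b` block. -/
abbrev Plot (a b : ℕ) := Fin a × Fin b

/-- A block array: an assignment of one of `t` treatments to each plot. -/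
abbrev BlockArray (a b t : ℕ) := Plot a b → Fin t

/-- The all-ones matrix. -/
def Jmat (n : Type*) : Matrix n n ℝ := Matrix.of fun _ _ => 1

/-- `B_m = I - J/m`. -/
noncomputable def Bmat (n : Type*) [Fintype n] [DecidableEq n] : Matrix n n ℝ :=
  1 - ((Fintype.card n : ℝ))⁻¹ • Jmat n

variable {a b t : ℕ}

/-- The treatment incidence matrix `T_s`. -/
def Tmat (s : BlockArray a b t) : Matrix (Plot a b) (Fin t) ℝ :=
  Matrix.of fun q k => if s q = k then 1 else 0

/-- Two plots are neighbors if they agree in one coordinate and differ by 1 in the other. -/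
def Neighbor (q r : Plot a b) : Prop :=
  (q.1 = r.1 ∧ (q.2.val + 1 = r.2.val ∨ r.2.val + 1 = q.2.val)) ∨
  (q.2 = r.2 ∧ (q.1.val + 1 = r.1.val ∨ r.1.val + 1 = q.1.val))

instance (q r : Plot a b) : Decidable (Neighbor q r) := by
  unfold Neighbor; infer_instance

/-- The adjacency matrix of the neighbor relation. -/
def Mmat (a b : ℕ) : Matrix (Plot a b) (Plot a b) ℝ :=
  Matrix.of fun q r => if Neighbor q r then 1 else 0

/-- `F_s = M T_s`. -/
def Fmat (s : BlockArray a b t) : Matrix (Plot a b) (Fin t) ℝ :=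
  Mmat a b * Tmat s

/-- `B̃ = Σ⁻¹ − Σ⁻¹ J Σ⁻¹ / (1'Σ⁻¹1)`. -/
noncomputable def Btilde (Sig : Matrix (Plot a b) (Plot a b) ℝ) :
    Matrix (Plot a b) (Plot a b) ℝ :=
  Sig⁻¹ - (∑ i, ∑ j, Sig⁻¹ i j)⁻¹ • (Sig⁻¹ * Jmat (Plot a b) * Sig⁻¹)

/-- `C_{s00} = T_s' W T_s` (with `W` playing the role of `B̃`). -/
def Cs00 (W : Matrix (Plot a b) (Plot a b) ℝ) (s : BlockArray a b t) :
    Matrix (Fin t) (Fin t) ℝ := (Tmat s)ᵀ * W * Tmat s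

/-- `C_{s01} = T_s' W F_s`. -/
def Cs01 (W : Matrix (Plot a b) (Plot a b) ℝ) (s : BlockArray a b t) :
    Matrix (Fin t) (Fin t) ℝ := (Tmat s)ᵀ * W * Fmat s

/-- `C_{s11} = F_s' W F_s`. -/
def Cs11 (W : Matrix (Plot a b) (Plot a b) ℝ) (s : BlockArray a b t) :
    Matrix (Fin t) (Fin t) ℝ := (Fmat s)ᵀ * W * Fmat s

/-- `c_{s00} = tr(B_t C_{s00})`. -/
noncomputable def cs00 (W : Matrix (Plot a b) (Plot a b) ℝ) (s : BlockArray a b t) : ℝ :=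
  Matrix.trace (Bmat (Fin t) * Cs00 W s)

noncomputable def cs01 (W : Matrix (Plot a b) (Plot a b) ℝ) (s : BlockArray a b t) : ℝ :=
  Matrix.trace (Bmat (Fin t) * Cs01 W s)

noncomputable def cs11 (W : Matrix (Plot a b) (Plot a b) ℝ) (s : BlockArray a b t) : ℝ :=
  Matrix.trace (Bmat (Fin t) * Cs11 W s)

/-- The quadratic `q_s(x) = c_{s00} + 2 c_{s01} x + c_{s11} x²`. -/
noncomputable def qpoly (W : Matrix (Plot a b) (Plot a b) ℝ) (s : BlockArray a b t) (x : ℝ) : ℝ :=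
  cs00 W s + 2 * cs01 W s * x + cs11 W s * x ^ 2

/-- A measure on the set of block arrays: nonnegative weights summing to one. -/
def IsMeasure (ξ : BlockArray a b t → ℝ) : Prop :=
  (∀ s, 0 ≤ ξ s) ∧ ∑ s, ξ s = 1

noncomputable def Cm00 (W : Matrix (Plot a b) (Plot a b) ℝ) (ξ : BlockArray a b t → ℝ) :
    Matrix (Fin t) (Fin t) ℝ := ∑ s, ξ s • Cs00 W s

noncomputable def Cm01 (W : Matrix (Plot a b) (Plot a b) ℝ) (ξ : BlockArray a b t → ℝ) :
    Matrix (Fin t) (Fin t) ℝ := ∑ s, ξ s • Cs01 W s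

noncomputable def Cm11 (W : Matrix (Plot a b) (Plot a b) ℝ) (ξ : BlockArray a b t → ℝ) :
    Matrix (Fin t) (Fin t) ℝ := ∑ s, ξ s • Cs11 W s

noncomputable def cm00 (W : Matrix (Plot a b) (Plot a b) ℝ) (ξ : BlockArray a b t → ℝ) : ℝ :=
  ∑ s, ξ s * cs00 W s

noncomputable def cm01 (W : Matrix (Plot a b) (Plot a b) ℝ) (ξ : BlockArray a b t → ℝ) : ℝ :=
  ∑ s, ξ s * cs01 W s

noncomputable def cm11 (W : Matrix (Plot a b) (Plot a b) ℝ) (ξ : BlockArray a b t → ℝ) : ℝ :=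
  ∑ s, ξ s * cs11 W s

/-- `q*_ξ = c_{ξ00} − c_{ξ01}²/c_{ξ11}`. -/
noncomputable def qstar (W : Matrix (Plot a b) (Plot a b) ℝ) (ξ : BlockArray a b t → ℝ) : ℝ :=
  cm00 W ξ - (cm01 W ξ) ^ 2 / cm11 W ξ

/-- `G` is a generalized inverse of `A`. -/
def IsGenInv (A G : Matrix (Fin t) (Fin t) ℝ) : Prop := A * G * A = A

/-- Information matrix `C_{ξ00} − C_{ξ01} G C_{ξ10}` computed with a generalized inverse `G`. -/
noncomputable def InfoMat (W : Matrix (Plot a b) (Plot a b) ℝ) (ξ : BlockArray a b t → ℝ)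
    (G : Matrix (Fin t) (Fin t) ℝ) : Matrix (Fin t) (Fin t) ℝ :=
  Cm00 W ξ - Cm01 W ξ * G * (Cm01 W ξ)ᵀ

/-- A criterion `Φ` on `t×t` real symmetric matrices: concave, Loewner-nondecreasing, and
invariant under simultaneous permutations of rows and columns. -/
def GoodPhi (t : ℕ) (Φ : Matrix (Fin t) (Fin t) ℝ → ℝ) : Prop :=
  (∀ A B : Matrix (Fin t) (Fin t) ℝ, A.IsSymm → B.IsSymm → ∀ α : ℝ, 0 ≤ α → α ≤ 1 →
      α * Φ A + (1 - α) * Φ B ≤ Φ (α • A + (1 - α) • B)) ∧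
  (∀ A B : Matrix (Fin t) (Fin t) ℝ, A.IsSymm → B.IsSymm → (B - A).PosSemidef → Φ A ≤ Φ B) ∧
  (∀ (σ : Equiv.Perm (Fin t)) (C : Matrix (Fin t) (Fin t) ℝ), Φ (C.submatrix σ σ) = Φ C)

/-- Universal optimality of a measure `ξ`. -/
def UnivOptimal (W : Matrix (Plot a b) (Plot a b) ℝ) (ξ : BlockArray a b t → ℝ) : Prop :=
  ∀ η : BlockArray a b t → ℝ, IsMeasure η →
    ∀ G H : Matrix (Fin t) (Fin t) ℝ, IsGenInv (Cm11 W ξ) G → IsGenInv (Cm11 W η) H →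
      ∀ Φ : Matrix (Fin t) (Fin t) ℝ → ℝ, GoodPhi t Φ →
        Φ (InfoMat W η H) ≤ Φ (InfoMat W ξ G)

/-- A measure is symmetric if it is invariant under relabeling of the treatments. -/
def IsSymmetricMeasure (ξ : BlockArray a b t → ℝ) : Prop :=
  ∀ (σ : Equiv.Perm (Fin t)) (s : BlockArray a b t), ξ (fun q => σ (s q)) = ξ s

/-- A matrix is completely symmetric if it is of the form `αI + βJ`. -/
def ComplSym (A : Matrix (Fin t) (Fin t) ℝ) : Prop :=
  ∃ α β : ℝ, A = α • (1 : Matrix (Fin t) (Fin t) ℝ) + β • Jmat (Fin t)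

/-- A measure is pseudo symmetric if `C_{ξ00}`, `C_{ξ01}`, `C_{ξ11}` are completely symmetric. -/
def PseudoSym (W : Matrix (Plot a b) (Plot a b) ℝ) (ξ : BlockArray a b t → ℝ) : Prop :=
  ComplSym (Cm00 W ξ) ∧ ComplSym (Cm01 W ξ) ∧ ComplSym (Cm11 W ξ)

/-- `r(x) = max_{s∈S} q_s(x)`. -/
noncomputable def rfun {a b : ℕ} (t : ℕ) (W : Matrix (Plot a b) (Plot a b) ℝ) (x : ℝ) : ℝ :=
  sSup (Set.range fun s : BlockArray a b t => qpoly W s x)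

/-- `min_{s∈S} q_s(x)`. -/
noncomputable def rmin {a b : ℕ} (t : ℕ) (W : Matrix (Plot a b) (Plot a b) ℝ) (x : ℝ) : ℝ :=
  sInf (Set.range fun s : BlockArray a b t => qpoly W s x)

/-- Number of plots assigned treatment `k` by `s`. -/
noncomputable def f0 (s : BlockArray a b t) (k : Fin t) : ℕ :=
  {q : Plot a b | s q = k}.ncard

/-- Replications of `k` among the columns `1,…,b−1`. -/
noncomputable def f1 (s : BlockArray a b t) (k : Fin t) : ℕ :=
  {q : Plot a b | s q = k ∧ q.2.val + 1 < b}.ncard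

/-- Replications of `k` among the columns `2,…,b`. -/
noncomputable def f2 (s : BlockArray a b t) (k : Fin t) : ℕ :=
  {q : Plot a b | s q = k ∧ 1 ≤ q.2.val}.ncard

/-- Replications of `k` among the rows `1,…,a−1`. -/
noncomputable def f3 (s : BlockArray a b t) (k : Fin t) : ℕ :=
  {q : Plot a b | s q = k ∧ q.1.val + 1 < a}.ncard

/-- Replications of `k` among the rows `2,…,a`. -/
noncomputable def f4 (s : BlockArray a b t) (k : Fin t) : ℕ :=
  {q : Plot a b | s q = k ∧ 1 ≤ q.1.val}.ncard

noncomputable def fc (s : BlockArray a b t) : ℕ → Fin t → ℕ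
  | 0 => f0 s
  | 1 => f1 s
  | 2 => f2 s
  | 3 => f3 s
  | 4 => f4 s
  | _ => fun _ => 0

/-- `h^{uv}_s = Σ_k f^u_{s,k} f^v_{s,k}`. -/
noncomputable def hval (s : BlockArray a b t) (u v : ℕ) : ℝ :=
  ∑ k : Fin t, (fc s u k : ℝ) * (fc s v k : ℝ)

noncomputable def h00 (s : BlockArray a b t) : ℝ := hval s 0 0

noncomputable def h1 (s : BlockArray a b t) : ℝ :=
  hval s 0 1 + hval s 0 2 + hval s 0 3 + hval s 0 4

noncomputable def h2 (s : BlockArray a b t) : ℝ :=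
  hval s 1 1 + hval s 2 2 + hval s 3 3 + hval s 4 4

noncomputable def h3 (s : BlockArray a b t) : ℝ :=
  hval s 1 2 + hval s 1 3 + hval s 1 4 + hval s 2 3 + hval s 2 4 + hval s 3 4

/-- `z¹_{s,r}`: horizontally adjacent pairs of plots receiving the same treatment. -/
noncomputable def zr1 (s : BlockArray a b t) : ℕ :=
  {qr : Plot a b × Plot a b |
    qr.1.1 = qr.2.1 ∧ qr.1.2.val + 1 = qr.2.2.val ∧ s qr.1 = s qr.2}.ncard

noncomputable def zr2 (s : BlockArray a b t) : ℕ :=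
  {qr : Plot a b × Plot a b |
    qr.1.1 = qr.2.1 ∧ qr.1.2.val + 2 = qr.2.2.val ∧ s qr.1 = s qr.2}.ncard

noncomputable def zc1 (s : BlockArray a b t) : ℕ :=
  {qr : Plot a b × Plot a b |
    qr.1.2 = qr.2.2 ∧ qr.1.1.val + 1 = qr.2.1.val ∧ s qr.1 = s qr.2}.ncard

noncomputable def zc2 (s : BlockArray a b t) : ℕ :=
  {qr : Plot a b × Plot a b |
    qr.1.2 = qr.2.2 ∧ qr.1.1.val + 2 = qr.2.1.val ∧ s qr.1 = s qr.2}.ncard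

/-- pairs `(i,j)`, `(i−1,j+1)` with the same treatment. -/
noncomputable def zd1 (s : BlockArray a b t) : ℕ :=
  {qr : Plot a b × Plot a b |
    qr.2.1.val + 1 = qr.1.1.val ∧ qr.1.2.val + 1 = qr.2.2.val ∧ s qr.1 = s qr.2}.ncard

/-- pairs `(i,j)`, `(i+1,j+1)` with the same treatment. -/
noncomputable def zd2 (s : BlockArray a b t) : ℕ :=
  {qr : Plot a b × Plot a b |
    qr.1.1.val + 1 = qr.2.1.val ∧ qr.1.2.val + 1 = qr.2.2.val ∧ s qr.1 = s qr.2}.ncard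

noncomputable def z1 (s : BlockArray a b t) : ℝ := 2 * zr1 s + 2 * zc1 s

noncomputable def z2 (s : BlockArray a b t) : ℝ :=
  2 * zr2 s + 2 * zc2 s + 4 * zd1 s + 4 * zd2 s

/-- `η = 4p − 2a − 2b − 2(8ab − 7a − 7b + 4)/t + 4(2p − a − b)²/(pt)` where `p = ab`. -/
noncomputable def eta (a b t : ℕ) : ℝ :=
  4 * ((a : ℝ) * b) - 2 * a - 2 * b - 2 * (8 * (a : ℝ) * b - 7 * a - 7 * b + 4) / t +
    4 * (2 * (a : ℝ) * b - a - b) ^ 2 / (((a : ℝ) * b) * t)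

/-- A corner plot of the `a × b` block. -/
def IsCorner (q : Plot a b) : Prop :=
  (q.1.val = 0 ∨ q.1.val + 1 = a) ∧ (q.2.val = 0 ∨ q.2.val + 1 = b)

/-- Treatment `k` is significant in `s`: it occupies exactly two plots, which are
neighbors, at least one of them being a corner plot. -/
def Significant (s : BlockArray a b t) (k : Fin t) : Prop :=
  ∃ u v : Plot a b, u ≠ v ∧ {q : Plot a b | s q = k} = {u, v} ∧
    Neighbor u v ∧ (IsCorner u ∨ IsCorner v)

/-- Treatment `k` is strictly significant in `s`: both of its two plots are corners. -/
def StrictSignificant (s : BlockArray a b t) (k : Fin t) : Prop :=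
  ∃ u v : Plot a b, u ≠ v ∧ {q : Plot a b | s q = k} = {u, v} ∧
    Neighbor u v ∧ IsCorner u ∧ IsCorner v

/-- `Q_i`: block arrays with exactly `i` significant treatments in which every other
treatment appears at most once. -/
def Qset (a b t : ℕ) (i : ℕ) : Set (BlockArray a b t) :=
  {s | {k : Fin t | Significant s k}.ncard = i ∧
       ∀ k : Fin t, ¬ Significant s k → f0 s k ≤ 1}

/-- `Q_j*`: members of `Q_j` whose significant treatments are all strictly significant. -/
def QsetStar (a b t : ℕ) (j : ℕ) : Set (BlockArray a b t) :=
  {s | s ∈ Qset a b t j ∧ ∀ k : Fin t, Significant s k → StrictSignificant s k}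

/-- Treatment `k` is connected in `s`. -/
def ConnectedIn (s : BlockArray a b t) (k : Fin t) : Prop :=
  ∀ q r : Plot a b, s q = k → s r = k →
    Relation.ReflTransGen (fun u v => Neighbor u v ∧ s u = k ∧ s v = k) q r


/-
Up to the term with coefficient `1/t`, which is common to all arrays, `q_s(x)` is the sum of the
entries of `(I + xM) B_p (I + xM)` over the pairs of plots that `s` treats alike. Hence `q_s(x)` is
its value for a binary array plus one weight for each ordered pair of distinct plots treated alike.
The number `x*` is the smaller root of the weight of an edge with an end in a corner, and it is
less than `1/p`. All other weights are negative at `x*`: an edge away from the corners has ends of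
larger degree, and for plots that are not neighbors the term in `x²`, which counts paths of length
two, is too small. So `y*` is the maximum, attained when only corner edges are treated alike; a
treatment then occupies at most two plots, as the grid has no triangle.

For `x < x*` a binary array beats `y*`, because its quadratic decreases on `(-∞, 1/p]`. For
`x > x*` an array with two corner edges treated alike does: its quadratic takes the value `y*` at
`x*` and increases on `[0, ∞)`.
-/
section TraceForm

lemma isSymm_Bmat (n : Type*) [Fintype n] [DecidableEq n] : (Bmat n).IsSymm := by
  ext i j
  simp [Bmat, Jmat, one_apply, eq_comm]

lemma isSymm_Mmat (a b : ℕ) : (Mmat a b).IsSymm := by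
  ext q r
  simp only [Mmat, transpose_apply, of_apply, Neighbor]
  grind

lemma trace_Bmat_mul_incidence (A : Matrix (Plot a b) (Plot a b) ℝ) (s : BlockArray a b t) :
    trace (Bmat (Fin t) * ((Tmat s)ᵀ * A * Tmat s)) =
      (∑ q, ∑ r, if s q = s r then A q r else 0) - (t : ℝ)⁻¹ * ∑ q, ∑ r, A q r := by
  have coincidence : Tmat s * (Tmat s)ᵀ = of fun q r => if s q = s r then 1 else 0 := by
    ext q r
    simp [mul_apply, Tmat, eq_comm]
  have all_ones : Tmat s * Jmat (Fin t) * (Tmat s)ᵀ = of fun _ _ => 1 := by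
    ext q r
    simp [mul_apply, Tmat, Jmat]
  calc trace (Bmat (Fin t) * ((Tmat s)ᵀ * A * Tmat s))
      = trace (A * (Tmat s * Bmat (Fin t) * (Tmat s)ᵀ)) := by
        rw [trace_mul_comm, Matrix.mul_assoc, Matrix.mul_assoc, trace_mul_comm, Matrix.mul_assoc]
    _ = _ := by
        rw [Bmat, Matrix.mul_sub, Matrix.mul_smul, Matrix.sub_mul, Matrix.smul_mul,
          Matrix.mul_one, coincidence, all_ones]
        simp [trace, mul_apply, mul_sub, Finset.mul_sum, Finset.sum_mul, eq_comm, mul_comm]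

lemma qpoly_eq_trace {W : Matrix (Plot a b) (Plot a b) ℝ} (hW : W.IsSymm)
    (s : BlockArray a b t) (x : ℝ) :
    qpoly W s x = trace (Bmat (Fin t) *
      ((Tmat s)ᵀ * ((1 + x • Mmat a b) * W * (1 + x • Mmat a b)) * Tmat s)) := by
  have cross : trace (Bmat (Fin t) * ((Fmat s)ᵀ * W * Tmat s)) = cs01 W s := by
    rw [← trace_transpose, cs01, Cs01, trace_mul_comm]
    simp only [transpose_mul, transpose_transpose, hW.eq, (isSymm_Bmat (Fin t)).eq,
      Matrix.mul_assoc]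
  have expand : (Tmat s)ᵀ * ((1 + x • Mmat a b) * W * (1 + x • Mmat a b)) * Tmat s =
      Cs00 W s + x • Cs01 W s + x • ((Fmat s)ᵀ * W * Tmat s) + x ^ 2 • Cs11 W s := by
    simp only [Cs00, Cs01, Cs11, Fmat, transpose_mul, (isSymm_Mmat a b).eq, Matrix.mul_add,
      Matrix.add_mul, Matrix.mul_one, Matrix.one_mul, Matrix.mul_smul, Matrix.smul_mul,
      Matrix.mul_assoc, smul_smul, smul_add, ← sq]
    abel
  rw [expand, qpoly]
  simp only [Matrix.mul_add, Matrix.mul_smul, trace_add, trace_smul, cross, smul_eq_mul]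
  simp only [cs00, cs01, cs11]
  ring

end TraceForm

section CoincidentPairs

variable {V κ : Type*} [Fintype V] [DecidableEq V] [DecidableEq κ]

/-- The ordered pairs of distinct points to which the labelling `s` gives the same label. -/
def coincidentPairs (s : V → κ) : Finset (V × V) :=
  {z | z.1 ≠ z.2 ∧ s z.1 = s z.2}

@[simp]
lemma mem_coincidentPairs {s : V → κ} {z : V × V} :
    z ∈ coincidentPairs s ↔ z.1 ≠ z.2 ∧ s z.1 = s z.2 := by
  simp [coincidentPairs]

lemma coincidentPairs_eq_empty {s : V → κ} (hs : s.Injective) : coincidentPairs s = ∅ := by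
  ext z
  simpa using fun hne h => hne (hs h)

lemma sum_ite_eq_trace_add_sum_coincidentPairs (A : Matrix V V ℝ) (s : V → κ) :
    (∑ u, ∑ v, if s u = s v then A u v else 0) =
      trace A + ∑ z ∈ coincidentPairs s, A z.1 z.2 := by
  have split (u v : V) : (if s u = s v then A u v else 0) =
      (if u = v then A u v else 0) + if u ≠ v ∧ s u = s v then A u v else 0 := by
    by_cases h : u = v <;> simp [h]
  simp only [split, Finset.sum_add_distrib, Finset.sum_ite_eq, Finset.mem_univ, if_true]
  rw [coincidentPairs, Finset.sum_filter, Fintype.sum_prod_type]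
  rfl

end CoincidentPairs

section AdjMatrix

variable {V : Type*} [Fintype V] (G : SimpleGraph V) [DecidableRel G.Adj]

lemma sum_adjMatrix_apply (u : V) : ∑ v, G.adjMatrix ℝ u v = G.degree u := by
  simpa [mulVec, dotProduct] using G.adjMatrix_mulVec_const_apply (a := (1 : ℝ)) (v := u)

lemma sum_adjMatrix_mul_self :
    ∑ u, ∑ v, (G.adjMatrix ℝ * G.adjMatrix ℝ) u v = ∑ v, (G.degree v : ℝ) ^ 2 := by
  have column (v : V) : ∑ u, G.adjMatrix ℝ u v = G.degree v := by
    rw [← sum_adjMatrix_apply]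
    exact Finset.sum_congr rfl fun u _ => G.isSymm_adjMatrix.apply v u
  simp only [mul_apply]
  rw [Finset.sum_comm_cycle]
  simp only [← Finset.mul_sum, sum_adjMatrix_apply, ← Finset.sum_mul, column, sq]

lemma adjMatrix_mul_self_apply_le_degree (u v : V) :
    (G.adjMatrix ℝ * G.adjMatrix ℝ) u v ≤ G.degree u := by
  rw [SimpleGraph.adjMatrix_mul_apply, ← SimpleGraph.card_neighborFinset_eq_degree,
    Finset.cast_card]
  refine Finset.sum_le_sum fun w _ => ?_
  rw [SimpleGraph.adjMatrix_apply]
  split_ifs <;> norm_num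

lemma adjMatrix_mul_self_apply_of_adj {G : SimpleGraph V} [DecidableRel G.Adj]
    (hG : G.CliqueFree 3) {u v : V} (h : G.Adj u v) :
    (G.adjMatrix ℝ * G.adjMatrix ℝ) u v = 0 := by
  classical
  rw [SimpleGraph.adjMatrix_mul_apply]
  refine Finset.sum_eq_zero fun w hw => ?_
  rw [SimpleGraph.mem_neighborFinset] at hw
  rw [SimpleGraph.adjMatrix_apply, if_neg]
  exact fun hwv => hG {u, v, w} (SimpleGraph.is3Clique_triple_iff.2 ⟨h, hw, hwv.symm⟩)

lemma sum_one_add_mul_degree_sq (x : ℝ) :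
    ∑ v, (1 + x * G.degree v) ^ 2 =
      Fintype.card V + 2 * x * ∑ v, (G.degree v : ℝ) + x ^ 2 * ∑ v, (G.degree v : ℝ) ^ 2 := by
  simp only [add_sq, mul_pow, Finset.sum_add_distrib, Finset.mul_sum]
  simp [mul_assoc]

end AdjMatrix

section PairWeight

variable {V : Type*} [Fintype V] [DecidableEq V] (G : SimpleGraph V) [DecidableRel G.Adj]

/-- The matrix `(I + xM) B (I + xM)`, where `M` is the adjacency matrix of `G`. For the grid, its
off-diagonal entry at `(u, v)` is what `q_s(x)` gains when `s` treats `u` and `v` alike. -/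
noncomputable def pairWeight (x : ℝ) : Matrix V V ℝ :=
  (1 + x • G.adjMatrix ℝ) * Bmat V * (1 + x • G.adjMatrix ℝ)

lemma pairWeight_apply (x : ℝ) (u v : V) :
    pairWeight G x u v =
      (1 : Matrix V V ℝ) u v + 2 * x * G.adjMatrix ℝ u v
        + x ^ 2 * (G.adjMatrix ℝ * G.adjMatrix ℝ) u v
        - (Fintype.card V : ℝ)⁻¹ * ((1 + x * G.degree u) * (1 + x * G.degree v)) := by
  have ones : ((1 + x • G.adjMatrix ℝ) * Jmat V * (1 + x • G.adjMatrix ℝ)) u v =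
      (1 + x * G.degree u) * (1 + x * G.degree v) := by
    have row (w : V) : ∑ w', (1 + x • G.adjMatrix ℝ) w w' = 1 + x * G.degree w := by
      simp only [Matrix.add_apply, Matrix.smul_apply, smul_eq_mul, Finset.sum_add_distrib,
        ← Finset.mul_sum, sum_adjMatrix_apply]
      simp [one_apply]
    have symm : (1 + x • G.adjMatrix ℝ).IsSymm := isSymm_one.add (G.isSymm_adjMatrix.smul x)
    rw [← row, ← row, Finset.sum_mul_sum, Finset.sum_comm]
    simp only [mul_apply, Jmat, of_apply, mul_one, Finset.sum_mul, symm.apply v]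
  rw [pairWeight, Bmat, Matrix.mul_sub, Matrix.sub_mul, Matrix.mul_one, Matrix.mul_smul,
    Matrix.smul_mul, Matrix.sub_apply, Matrix.smul_apply, ones, smul_eq_mul]
  simp only [Matrix.mul_add, Matrix.add_mul, Matrix.mul_one, Matrix.one_mul, Matrix.mul_smul,
    Matrix.smul_mul, Matrix.add_apply, Matrix.smul_apply, smul_eq_mul]
  ring

lemma trace_pairWeight [Nonempty V] (x : ℝ) :
    trace (pairWeight G x) = Fintype.card V - 1
      - 2 * x * (∑ v, (G.degree v : ℝ)) / Fintype.card V
      + x ^ 2 * (∑ v, (G.degree v : ℝ) - (∑ v, (G.degree v : ℝ) ^ 2) / Fintype.card V) := by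
  have hV : (Fintype.card V : ℝ) ≠ 0 := Nat.cast_ne_zero.2 Fintype.card_ne_zero
  have diag (v : V) : pairWeight G x v v =
      1 + x ^ 2 * G.degree v - (Fintype.card V : ℝ)⁻¹ * (1 + x * G.degree v) ^ 2 := by
    rw [pairWeight_apply, one_apply_eq, SimpleGraph.adjMatrix_mul_self_apply_self]
    simp [sq]
  simp only [trace, diag_apply, diag, Finset.sum_sub_distrib, Finset.sum_add_distrib,
    ← Finset.mul_sum, sum_one_add_mul_degree_sq]
  simp only [Finset.sum_const, Finset.card_univ, nsmul_eq_mul, mul_one]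
  field_simp
  ring

lemma sum_pairWeight [Nonempty V] (x : ℝ) :
    ∑ u, ∑ v, pairWeight G x u v =
      x ^ 2 * (∑ v, (G.degree v : ℝ) ^ 2 - (∑ v, (G.degree v : ℝ)) ^ 2 / Fintype.card V) := by
  have hV : (Fintype.card V : ℝ) ≠ 0 := Nat.cast_ne_zero.2 Fintype.card_ne_zero
  simp only [pairWeight_apply, Finset.sum_sub_distrib, Finset.sum_add_distrib, ← Finset.mul_sum,
    ← Finset.sum_mul, sum_adjMatrix_apply, sum_adjMatrix_mul_self]
  simp only [one_apply, Finset.sum_ite_eq, Finset.mem_univ, if_true, Finset.sum_const,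
    Finset.card_univ, nsmul_eq_mul, mul_one]
  field_simp
  ring

variable {G} {u v : V} {x : ℝ}

lemma pairWeight_of_adj (hG : G.CliqueFree 3) (h : G.Adj u v) :
    pairWeight G x u v =
      2 * x - (Fintype.card V : ℝ)⁻¹ * ((1 + x * G.degree u) * (1 + x * G.degree v)) := by
  rw [pairWeight_apply, adjMatrix_mul_self_apply_of_adj hG h, SimpleGraph.adjMatrix_apply,
    if_pos h, one_apply_ne h.ne]
  ring

lemma pairWeight_neg_of_not_adj (hx₀ : 0 ≤ x) (hx₁ : x ≤ (Fintype.card V : ℝ)⁻¹) (hne : u ≠ v)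
    (h : ¬G.Adj u v) : pairWeight G x u v < 0 := by
  have hV : (0 : ℝ) < Fintype.card V := Nat.cast_pos.2 (Fintype.card_pos_iff.2 ⟨u⟩)
  have hu : 0 ≤ x * G.degree u := by positivity
  have hv : 0 ≤ x * G.degree v := by positivity
  rw [pairWeight_apply, SimpleGraph.adjMatrix_apply, if_neg h, one_apply_ne hne, mul_zero,
    zero_add, zero_add, sub_neg]
  calc x ^ 2 * (G.adjMatrix ℝ * G.adjMatrix ℝ) u v
      ≤ x ^ 2 * G.degree u := by
        gcongr
        exact adjMatrix_mul_self_apply_le_degree G u v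
    _ = x * (x * G.degree u) := by ring
    _ ≤ (Fintype.card V : ℝ)⁻¹ * (x * G.degree u) := by gcongr
    _ < (Fintype.card V : ℝ)⁻¹ * ((1 + x * G.degree u) * (1 + x * G.degree v)) := by
        gcongr _ * ?_
        nlinarith

end PairWeight

section PathGraph

instance (n : ℕ) : DecidableRel (SimpleGraph.pathGraph n).Adj :=
  fun _ _ => decidable_of_iff' _ SimpleGraph.pathGraph_adj

lemma degree_pathGraph {n : ℕ} (i : Fin n) :
    (SimpleGraph.pathGraph n).degree i =
      (if i.val + 1 < n then 1 else 0) + if 0 < i.val then 1 else 0 := by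
  have next : (Finset.univ.filter fun j : Fin n => i.val + 1 = j.val).card =
      if i.val + 1 < n then 1 else 0 := by
    split_ifs with h
    · exact Finset.card_eq_one.2 ⟨⟨i + 1, h⟩, by ext j; simp [Fin.ext_iff, eq_comm]⟩
    · simp only [Finset.card_eq_zero, Finset.filter_eq_empty_iff]
      omega
  have previous : (Finset.univ.filter fun j : Fin n => j.val + 1 = i.val).card =
      if 0 < i.val then 1 else 0 := by
    split_ifs with h
    · refine Finset.card_eq_one.2 ⟨⟨i - 1, by omega⟩, ?_⟩
      ext j
      simp only [Finset.mem_filter, Finset.mem_univ, true_and, Finset.mem_singleton, Fin.ext_iff]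
      omega
    · simp only [Finset.card_eq_zero, Finset.filter_eq_empty_iff]
      omega
  rw [← next, ← previous, ← Finset.card_union_of_disjoint, ← Finset.filter_or,
    ← SimpleGraph.card_neighborFinset_eq_degree]
  · congr 1
    ext j
    simp [SimpleGraph.pathGraph_adj]
  · rw [Finset.disjoint_filter]
    omega

variable {n : ℕ}

lemma sum_degree_pathGraph (hn : 2 ≤ n) :
    ∑ i, ((SimpleGraph.pathGraph n).degree i : ℝ) = 2 * n - 2 := by
  obtain ⟨m, rfl⟩ : ∃ m, n = m + 2 := ⟨n - 2, by omega⟩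
  simp only [degree_pathGraph]
  rw [Fin.sum_univ_castSucc, Fin.sum_univ_succ]
  simp only [Fin.castSucc_zero, Fin.coe_ofNat_eq_mod, Nat.zero_mod, zero_add,
    lt_add_iff_pos_left, Order.lt_add_one_iff, zero_le, ↓reduceIte, lt_self_iff_false, add_zero,
    Nat.cast_one, Fin.castSucc_succ, Fin.val_succ, Fin.val_castSucc,
    add_lt_add_iff_right, Order.add_one_le_iff, Fin.is_lt, Nat.reduceAdd, Nat.cast_ofNat,
    Finset.sum_const, Finset.card_univ, Fintype.card_fin, nsmul_eq_mul, Fin.val_last,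
    Nat.cast_add]
  ring

lemma sum_degree_sq_pathGraph (hn : 2 ≤ n) :
    ∑ i, ((SimpleGraph.pathGraph n).degree i : ℝ) ^ 2 = 4 * n - 6 := by
  obtain ⟨m, rfl⟩ : ∃ m, n = m + 2 := ⟨n - 2, by omega⟩
  simp only [degree_pathGraph]
  rw [Fin.sum_univ_castSucc, Fin.sum_univ_succ]
  simp only [Fin.castSucc_zero, Fin.coe_ofNat_eq_mod, Nat.zero_mod, zero_add,
    lt_add_iff_pos_left, Order.lt_add_one_iff, zero_le, ↓reduceIte, lt_self_iff_false, add_zero,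
    Nat.cast_one, one_pow, Fin.castSucc_succ, Fin.val_succ, Fin.val_castSucc,
    add_lt_add_iff_right, Order.add_one_le_iff, Fin.is_lt, Nat.reduceAdd, Nat.cast_ofNat,
    Finset.sum_const, Finset.card_univ, Fintype.card_fin, nsmul_eq_mul, Fin.val_last,
    Nat.cast_add]
  ring

end PathGraph

section GridGraph

lemma Neighbor.symm {q r : Plot a b} (h : Neighbor q r) : Neighbor r q := by
  unfold Neighbor at *
  grind

/-- The `a × b` grid graph, whose vertices are the plots and whose edges join neighbors. -/
def gridGraph (a b : ℕ) : SimpleGraph (Plot a b) where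
  Adj := Neighbor
  symm := ⟨fun _ _ => Neighbor.symm⟩
  loopless := ⟨fun q => by simp [Neighbor]⟩

instance (a b : ℕ) : DecidableRel (gridGraph a b).Adj :=
  fun q r => inferInstanceAs (Decidable (Neighbor q r))

lemma adjMatrix_gridGraph (a b : ℕ) : (gridGraph a b).adjMatrix ℝ = Mmat a b := rfl

lemma gridGraph_eq_boxProd (a b : ℕ) :
    gridGraph a b = SimpleGraph.pathGraph a □ SimpleGraph.pathGraph b := by
  ext q r
  simp only [gridGraph, Neighbor, SimpleGraph.boxProd_adj, SimpleGraph.pathGraph_adj]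
  tauto

lemma gridGraph_cliqueFree_three (a b : ℕ) : (gridGraph a b).CliqueFree 3 := by
  let parity : (gridGraph a b).Coloring Bool :=
    SimpleGraph.Coloring.mk (fun q => decide ((q.1.val + q.2.val) % 2 = 0)) fun {q r} h => by
      simp only [gridGraph, Neighbor, Fin.ext_iff] at h
      simp only [ne_eq, decide_eq_decide]
      omega
  exact parity.colorable.cliqueFree (by simp)

lemma degree_gridGraph (i : Fin a) (j : Fin b) :
    (gridGraph a b).degree (i, j) =
      (SimpleGraph.pathGraph a).degree i + (SimpleGraph.pathGraph b).degree j := by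
  classical
  rw [← SimpleGraph.degree_boxProd (i, j)]
  congr!
  exact gridGraph_eq_boxProd a b

lemma sum_degree_gridGraph (ha : 2 ≤ a) (hb : 2 ≤ b) :
    ∑ q, ((gridGraph a b).degree q : ℝ) = 4 * (a * b) - 2 * a - 2 * b := by
  simp only [Fintype.sum_prod_type, degree_gridGraph, Nat.cast_add, Finset.sum_add_distrib,
    sum_degree_pathGraph hb, Finset.sum_const, Finset.card_univ, Fintype.card_fin, nsmul_eq_mul,
    ← Finset.mul_sum, sum_degree_pathGraph ha]
  ring

lemma sum_degree_sq_gridGraph (ha : 2 ≤ a) (hb : 2 ≤ b) :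
    ∑ q, ((gridGraph a b).degree q : ℝ) ^ 2 = 16 * (a * b) - 14 * a - 14 * b + 8 := by
  simp only [Fintype.sum_prod_type, degree_gridGraph, Nat.cast_add, add_sq, mul_assoc,
    Finset.sum_add_distrib, Finset.sum_const, Finset.card_univ, Fintype.card_fin, nsmul_eq_mul,
    ← Finset.mul_sum, ← Finset.sum_mul, sum_degree_pathGraph ha, sum_degree_pathGraph hb,
    sum_degree_sq_pathGraph ha, sum_degree_sq_pathGraph hb]
  ring

variable {q r : Plot a b}

lemma degree_gridGraph_of_isCorner (ha : 2 ≤ a) (hb : 2 ≤ b) (hq : IsCorner q) :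
    (gridGraph a b).degree q = 2 := by
  rw [degree_gridGraph, degree_pathGraph, degree_pathGraph]
  unfold IsCorner at hq
  split_ifs <;> omega

lemma degree_gridGraph_of_neighbor_isCorner (ha : 3 ≤ a) (hb : 3 ≤ b) (hq : IsCorner q)
    (h : Neighbor q r) : (gridGraph a b).degree r = 3 := by
  rw [degree_gridGraph, degree_pathGraph, degree_pathGraph]
  unfold IsCorner at hq
  simp only [Neighbor, Fin.ext_iff] at h
  split_ifs <;> omega

lemma three_le_degree_gridGraph (ha : 2 ≤ a) (hb : 2 ≤ b) (hq : ¬IsCorner q) :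
    3 ≤ (gridGraph a b).degree q := by
  rw [degree_gridGraph, degree_pathGraph, degree_pathGraph]
  unfold IsCorner at hq
  split_ifs <;> omega

end GridGraph

section CornerEdge

/-- Two neighboring plots at least one of which is a corner: the pairs of plots that a significant
treatment may occupy. -/
def IsCornerEdge (q r : Plot a b) : Prop :=
  Neighbor q r ∧ (IsCorner q ∨ IsCorner r)

/-- The value of `pairWeight` at a corner edge of a grid with `p` plots. The factors `1 + 2x` and
`1 + 3x` come from the degrees of the two ends, a corner and a border plot. -/
noncomputable def cornerWeight (p x : ℝ) : ℝ :=
  2 * x - p⁻¹ * ((1 + 2 * x) * (1 + 3 * x))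

variable {q r : Plot a b} {x : ℝ}

lemma IsCornerEdge.symm (h : IsCornerEdge q r) : IsCornerEdge r q :=
  ⟨h.1.symm, h.2.symm⟩

lemma pairWeight_of_neighbor (h : Neighbor q r) :
    pairWeight (gridGraph a b) x q r =
      2 * x - ((a : ℝ) * b)⁻¹ *
        ((1 + x * (gridGraph a b).degree q) * (1 + x * (gridGraph a b).degree r)) := by
  simpa using pairWeight_of_adj (gridGraph_cliqueFree_three a b) (x := x) h

lemma pairWeight_of_isCornerEdge (ha : 3 ≤ a) (hb : 3 ≤ b) (h : IsCornerEdge q r) :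
    pairWeight (gridGraph a b) x q r = cornerWeight (a * b) x := by
  obtain ⟨hqr, hc⟩ := h
  have ha₂ : 2 ≤ a := by omega
  have hb₂ : 2 ≤ b := by omega
  rw [pairWeight_of_neighbor hqr, cornerWeight]
  rcases hc with hq | hr
  · rw [degree_gridGraph_of_isCorner ha₂ hb₂ hq, degree_gridGraph_of_neighbor_isCorner ha hb hq hqr]
    push_cast
    ring
  · rw [degree_gridGraph_of_isCorner ha₂ hb₂ hr,
      degree_gridGraph_of_neighbor_isCorner ha hb hr hqr.symm]
    push_cast
    ring

lemma pairWeight_lt_cornerWeight (ha : 2 ≤ a) (hb : 2 ≤ b) (hx : 0 < x) (h : Neighbor q r)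
    (hq : ¬IsCorner q) (hr : ¬IsCorner r) :
    pairWeight (gridGraph a b) x q r < cornerWeight (a * b) x := by
  have hq₃ : (3 : ℝ) ≤ (gridGraph a b).degree q :=
    mod_cast three_le_degree_gridGraph ha hb hq
  have hr₃ : (3 : ℝ) ≤ (gridGraph a b).degree r :=
    mod_cast three_le_degree_gridGraph ha hb hr
  rw [pairWeight_of_neighbor h, cornerWeight]
  gcongr 2 * x - _ * ?_
  calc (1 + 2 * x) * (1 + 3 * x) < (1 + x * 3) * (1 + x * 3) := by nlinarith
    _ ≤ _ := by gcongr

lemma pairWeight_neg_of_not_isCornerEdge (ha : 2 ≤ a) (hb : 2 ≤ b) (hx₀ : 0 < x)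
    (hx₁ : x ≤ ((a : ℝ) * b)⁻¹) (hκ : cornerWeight (a * b) x ≤ 0) (hne : q ≠ r)
    (h : ¬IsCornerEdge q r) : pairWeight (gridGraph a b) x q r < 0 := by
  by_cases hqr : Neighbor q r
  · have hc : ¬IsCorner q ∧ ¬IsCorner r := not_or.1 fun hc => h ⟨hqr, hc⟩
    exact (pairWeight_lt_cornerWeight ha hb hx₀ hqr hc.1 hc.2).trans_le hκ
  · exact pairWeight_neg_of_not_adj hx₀.le (by simpa using hx₁) hne hqr

lemma pairWeight_nonpos (ha : 3 ≤ a) (hb : 3 ≤ b) (hx₀ : 0 < x) (hx₁ : x ≤ ((a : ℝ) * b)⁻¹)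
    (hκ : cornerWeight (a * b) x = 0) (hne : q ≠ r) : pairWeight (gridGraph a b) x q r ≤ 0 := by
  by_cases h : IsCornerEdge q r
  · exact ((pairWeight_of_isCornerEdge ha hb h).trans hκ).le
  · exact (pairWeight_neg_of_not_isCornerEdge (by omega) (by omega) hx₀ hx₁ hκ.le hne h).le

lemma pairWeight_eq_zero_iff (ha : 3 ≤ a) (hb : 3 ≤ b) (hx₀ : 0 < x) (hx₁ : x ≤ ((a : ℝ) * b)⁻¹)
    (hκ : cornerWeight (a * b) x = 0) (hne : q ≠ r) :
    pairWeight (gridGraph a b) x q r = 0 ↔ IsCornerEdge q r := by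
  refine ⟨fun h => ?_, fun h => (pairWeight_of_isCornerEdge ha hb h).trans hκ⟩
  by_contra hqr
  exact (pairWeight_neg_of_not_isCornerEdge (by omega) (by omega) hx₀ hx₁ hκ.le hne hqr).ne h

end CornerEdge

section CornerRoot

/-- The smaller root of `cornerWeight p`, whose numerator is `-(6x² - (2p - 5)x + 1)`. -/
noncomputable def cornerRoot (p : ℝ) : ℝ :=
  ((2 * p - 5) - √((2 * p - 5) ^ 2 - 24)) / 12

variable {p : ℝ}

lemma cornerRoot_pos (hp : 5 / 2 < p) : 0 < cornerRoot p := by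
  have : √((2 * p - 5) ^ 2 - 24) < 2 * p - 5 :=
    (Real.sqrt_lt' (by linarith)).2 (by linarith)
  rw [cornerRoot]
  linarith

lemma cornerRoot_lt_inv (hp : 6 < p) : cornerRoot p < p⁻¹ := by
  have hp₀ : 0 < p⁻¹ := by positivity
  have hpp : p * p⁻¹ = 1 := mul_inv_cancel₀ (by positivity)
  have hp₁ : 6 * p⁻¹ < 1 := by nlinarith
  have : 2 * p - 5 - 12 * p⁻¹ < √((2 * p - 5) ^ 2 - 24) := by
    refine Real.lt_sqrt_of_sq_lt ?_
    nlinarith [mul_pos hp₀ (sub_pos.2 hp₁)]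
  rw [cornerRoot]
  linarith

lemma cornerWeight_cornerRoot (hp : 5 ≤ p) : cornerWeight p (cornerRoot p) = 0 := by
  have hsq := Real.sq_sqrt (x := (2 * p - 5) ^ 2 - 24) (by nlinarith)
  have hp₀ : p ≠ 0 := by positivity
  rw [cornerWeight, cornerRoot]
  field_simp
  linear_combination (-6) * hsq

end CornerRoot

section BinaryValue

/-- The coefficient `c_{s11}` of a binary array `s`. -/
noncomputable def binaryLead (a b t : ℕ) : ℝ :=
  eta a b t - (16 * ((a : ℝ) * b) - 14 * a - 14 * b + 8) / (a * b)

/-- The value `q_s(x)` at a binary array `s`. -/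
noncomputable def binaryValue (a b t : ℕ) (x : ℝ) : ℝ :=
  (a : ℝ) * b - 1 - 2 * x * (4 * ((a : ℝ) * b) - 2 * a - 2 * b) / (a * b) + x ^ 2 * binaryLead a b t

lemma qpoly_eq_binaryValue_add (ha : 2 ≤ a) (hb : 2 ≤ b) (s : BlockArray a b t) (x : ℝ) :
    qpoly (Bmat (Plot a b)) s x =
      binaryValue a b t x + ∑ z ∈ coincidentPairs s, pairWeight (gridGraph a b) x z.1 z.2 := by
  have : Nonempty (Plot a b) := ⟨⟨0, by omega⟩, ⟨0, by omega⟩⟩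
  have binary : trace (pairWeight (gridGraph a b) x) -
      (t : ℝ)⁻¹ * ∑ q, ∑ r, pairWeight (gridGraph a b) x q r = binaryValue a b t x := by
    rw [trace_pairWeight, sum_pairWeight, sum_degree_gridGraph ha hb,
      sum_degree_sq_gridGraph ha hb, binaryValue, binaryLead, eta, Fintype.card_prod,
      Fintype.card_fin, Fintype.card_fin]
    push_cast
    ring
  rw [qpoly_eq_trace (isSymm_Bmat _), trace_Bmat_mul_incidence, ← adjMatrix_gridGraph, ← pairWeight,
    sum_ite_eq_trace_add_sum_coincidentPairs, ← binary]
  ring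

lemma eta_eq (a b t : ℕ) :
    eta a b t = 4 * ((a : ℝ) * b) - 2 * a - 2 * b -
      (16 * ((a : ℝ) * b) - 14 * a - 14 * b + 8 -
        (4 * ((a : ℝ) * b) - 2 * a - 2 * b) ^ 2 / (a * b)) / t := by
  rw [eta]
  ring

lemma sq_sum_degree_gridGraph_le (ha : 2 ≤ a) (hb : 2 ≤ b) :
    (4 * ((a : ℝ) * b) - 2 * a - 2 * b) ^ 2 / (a * b) ≤
      16 * ((a : ℝ) * b) - 14 * a - 14 * b + 8 := by
  rw [← sum_degree_gridGraph ha hb, ← sum_degree_sq_gridGraph ha hb, div_le_iff₀' (by positivity)]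
  simpa using sq_sum_le_card_mul_sum_sq (s := Finset.univ)
    (f := fun q : Plot a b => ((gridGraph a b).degree q : ℝ))

lemma binaryLead_le (ha : 2 ≤ a) (hb : 2 ≤ b) :
    binaryLead a b t ≤ 4 * ((a : ℝ) * b) - 2 * a - 2 * b := by
  have variance := sub_nonneg.2 (sq_sum_degree_gridGraph_le ha hb)
  have squares : 0 ≤ 16 * ((a : ℝ) * b) - 14 * a - 14 * b + 8 :=
    le_trans (by positivity) (sq_sum_degree_gridGraph_le ha hb)
  rw [binaryLead, eta_eq]
  linarith [div_nonneg variance (Nat.cast_nonneg t),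
    div_nonneg squares (by positivity : 0 ≤ (a : ℝ) * b)]

lemma le_binaryLead (ha : 3 ≤ a) (hb : 3 ≤ b) (ht : a * b ≤ t) :
    24 * ((a : ℝ) * b)⁻¹ ≤ binaryLead a b t := by
  have ha' : (3 : ℝ) ≤ a := mod_cast ha
  have hb' : (3 : ℝ) ≤ b := mod_cast hb
  have ht' : (a : ℝ) * b ≤ t := mod_cast ht
  have variance := sub_nonneg.2 (sq_sum_degree_gridGraph_le (by omega : 2 ≤ a) (by omega : 2 ≤ b))
  have sq_nonneg : 0 ≤ (4 * ((a : ℝ) * b) - 2 * a - 2 * b) ^ 2 / (a * b) := by positivity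
  rw [binaryLead, eta_eq]
  set S₁ : ℝ := 4 * ((a : ℝ) * b) - 2 * a - 2 * b
  set S₂ : ℝ := 16 * ((a : ℝ) * b) - 14 * a - 14 * b + 8
  have le_squares : (S₂ - S₁ ^ 2 / (a * b)) / t ≤ S₂ / (a * b) :=
    div_le_div₀ (by linarith) (by linarith) (by positivity) ht'
  have : 24 * ((a : ℝ) * b)⁻¹ + 2 * (S₂ / (a * b)) ≤ S₁ := by
    rw [← div_eq_mul_inv, ← mul_div_assoc, ← add_div, div_le_iff₀ (by positivity)]
    have h₁ : 9 ≤ (a : ℝ) * b := by nlinarith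
    have h₂ : 3 * ((a : ℝ) + b) ≤ 2 * (a * b) := by nlinarith
    simp only [S₁, S₂]
    generalize (a : ℝ) * b = p at *
    nlinarith
  linarith

lemma strictAntiOn_binaryValue (ha : 3 ≤ a) (hb : 3 ≤ b) (ht : a * b ≤ t) :
    StrictAntiOn (binaryValue a b t) (Set.Iic ((a : ℝ) * b)⁻¹) := by
  intro x hx y hy hxy
  rw [Set.mem_Iic] at hx hy
  have lead_pos : 0 < binaryLead a b t :=
    lt_of_lt_of_le (by positivity) (le_binaryLead ha hb ht)
  have slope : binaryLead a b t * (x + y) <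
      (4 * ((a : ℝ) * b) - 2 * a - 2 * b) * (2 * ((a : ℝ) * b)⁻¹) :=
    calc binaryLead a b t * (x + y) < binaryLead a b t * (2 * ((a : ℝ) * b)⁻¹) := by
          gcongr
          linarith
      _ ≤ _ := by
          gcongr
          exact binaryLead_le (by omega) (by omega)
  simp only [binaryValue, div_eq_mul_inv]
  linarith [mul_pos (sub_pos.2 hxy) (sub_pos.2 slope)]

lemma strictMonoOn_binaryValue_add_cornerWeight (ha : 3 ≤ a) (hb : 3 ≤ b) (ht : a * b ≤ t) :
    StrictMonoOn (fun x => binaryValue a b t x + 4 * cornerWeight (a * b) x) (Set.Ici 0) := by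
  intro x hx y hy hxy
  rw [Set.mem_Ici] at hx hy
  have ha' : (3 : ℝ) ≤ a := mod_cast ha
  have hb' : (3 : ℝ) ≤ b := mod_cast hb
  have slope : 0 < ((a : ℝ) * b)⁻¹ * (4 * a + 4 * b - 20) := mul_pos (by positivity) (by linarith)
  have curvature : 0 ≤ (binaryLead a b t - 24 * ((a : ℝ) * b)⁻¹) * (x + y) :=
    mul_nonneg (sub_nonneg.2 (le_binaryLead ha hb ht)) (by linarith)
  have hp : (a : ℝ) * b * ((a : ℝ) * b)⁻¹ = 1 := mul_inv_cancel₀ (by positivity)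
  have increment : 0 < (y - x) * (((a : ℝ) * b)⁻¹ * (4 * a + 4 * b - 20) +
      (binaryLead a b t - 24 * ((a : ℝ) * b)⁻¹) * (x + y)) :=
    mul_pos (sub_pos.2 hxy) (by linarith)
  simp only [binaryValue, cornerWeight, div_eq_mul_inv]
  linear_combination increment + 8 * (y - x) * hp

end BinaryValue

section Qset

variable {s : BlockArray a b t}

lemma Significant.exists_isCorner {k : Fin t} (h : Significant s k) :
    ∃ q, IsCorner q ∧ s q = k := by
  obtain ⟨u, v, -, hk, -, hc⟩ := h
  have hu : u ∈ {q | s q = k} := hk ▸ Or.inl rfl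
  have hv : v ∈ {q | s q = k} := hk ▸ Or.inr rfl
  exact hc.elim (fun hu' => ⟨u, hu', hu⟩) (fun hv' => ⟨v, hv', hv⟩)

lemma ncard_isCorner_le_four (a b : ℕ) : {q : Plot a b | IsCorner q}.ncard ≤ 4 := by
  let position (q : Plot a b) : ℕ × ℕ := (q.1, q.2)
  have injective : position.Injective := fun q r h => by
    simpa [position, Prod.ext_iff, Fin.ext_iff] using h
  have image_subset : position '' {q | IsCorner q} ⊆
      ({(0, 0), (0, b - 1), (a - 1, 0), (a - 1, b - 1)} : Finset (ℕ × ℕ)) := by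
    rintro _ ⟨q, hq, rfl⟩
    simp only [Set.mem_ofPred_eq, IsCorner] at hq
    simp only [position, Finset.coe_insert, Finset.coe_singleton, Set.mem_insert_iff,
      Set.mem_singleton_iff, Prod.mk.injEq]
    omega
  rw [← Set.ncard_image_of_injective _ injective]
  refine (Set.ncard_le_ncard image_subset (Finset.finite_toSet _)).trans ?_
  rw [Set.ncard_coe_finset]
  exact Finset.card_le_four

lemma ncard_significant_le_four (s : BlockArray a b t) : {k | Significant s k}.ncard ≤ 4 :=
  calc {k | Significant s k}.ncard ≤ (s '' {q | IsCorner q}).ncard :=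
        Set.ncard_le_ncard (fun _ hk => hk.exists_isCorner) (Set.toFinite _)
    _ ≤ {q : Plot a b | IsCorner q}.ncard := Set.ncard_image_le (Set.toFinite _)
    _ ≤ 4 := ncard_isCorner_le_four a b

lemma mem_Qset_union_iff :
    s ∈ Qset a b t 0 ∪ Qset a b t 1 ∪ Qset a b t 2 ∪ Qset a b t 3 ∪ Qset a b t 4 ↔
      ∀ k, ¬Significant s k → f0 s k ≤ 1 := by
  have hle := ncard_significant_le_four s
  simp only [Set.mem_union, Qset, Set.mem_ofPred_eq, ← or_and_right, and_iff_right_iff_imp]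
  omega

lemma Significant.isCornerEdge {q r : Plot a b} (h : Significant s (s q)) (hne : q ≠ r)
    (hs : s q = s r) : IsCornerEdge q r := by
  obtain ⟨u, v, -, hset, huv⟩ := h
  change IsCornerEdge u v at huv
  have hq : q ∈ ({u, v} : Set (Plot a b)) := hset ▸ rfl
  have hr : r ∈ ({u, v} : Set (Plot a b)) := hset ▸ hs.symm
  rcases hq with rfl | rfl <;> rcases hr with rfl | rfl
  exacts [absurd rfl hne, huv, huv.symm, absurd rfl hne]

lemma significant_of_isCornerEdge {u v : Plot a b} (hne : u ≠ v) (huv : s u = s v)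
    (h : ∀ q r, q ≠ r → s q = s r → IsCornerEdge q r) : Significant s (s u) := by
  refine ⟨u, v, hne, Set.ext fun w => ⟨fun hw => ?_, ?_⟩, h u v hne huv⟩
  · by_contra! hw'
    obtain ⟨hwu, hwv⟩ := not_or.1 hw'
    exact gridGraph_cliqueFree_three a b {w, u, v} <| SimpleGraph.is3Clique_triple_iff.2
      ⟨(h w u hwu hw).1, (h w v hwv (hw.trans huv)).1, (h u v hne huv).1⟩
  · rintro (rfl | rfl)
    exacts [rfl, huv.symm]

lemma mem_Qset_union_iff_forall_isCornerEdge :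
    s ∈ Qset a b t 0 ∪ Qset a b t 1 ∪ Qset a b t 2 ∪ Qset a b t 3 ∪ Qset a b t 4 ↔
      ∀ q r, q ≠ r → s q = s r → IsCornerEdge q r := by
  rw [mem_Qset_union_iff]
  refine ⟨fun h q r hne hs => ?_, fun h k hk => ?_⟩
  · refine Significant.isCornerEdge (not_not.1 fun hns => hne ?_) hne hs
    exact (Set.ncard_le_one (Set.toFinite _)).1 (h _ hns) q rfl r hs.symm
  · refine (Set.ncard_le_one (Set.toFinite _)).2 fun u hu v hv => ?_
    obtain rfl : s u = k := hu
    exact not_not.1 fun hne => hk (significant_of_isCornerEdge hne (Eq.symm hv) h)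

end Qset

section Maximum

variable {x : ℝ}

lemma qpoly_le_binaryValue (ha : 3 ≤ a) (hb : 3 ≤ b) (hx₀ : 0 < x) (hx₁ : x ≤ ((a : ℝ) * b)⁻¹)
    (hκ : cornerWeight (a * b) x = 0) (s : BlockArray a b t) :
    qpoly (Bmat (Plot a b)) s x ≤ binaryValue a b t x := by
  rw [qpoly_eq_binaryValue_add (by omega) (by omega)]
  exact add_le_of_nonpos_right <| Finset.sum_nonpos fun z hz =>
    pairWeight_nonpos ha hb hx₀ hx₁ hκ (mem_coincidentPairs.1 hz).1

lemma qpoly_eq_binaryValue_iff (ha : 3 ≤ a) (hb : 3 ≤ b) (hx₀ : 0 < x)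
    (hx₁ : x ≤ ((a : ℝ) * b)⁻¹) (hκ : cornerWeight (a * b) x = 0) (s : BlockArray a b t) :
    qpoly (Bmat (Plot a b)) s x = binaryValue a b t x ↔
      ∀ q r, q ≠ r → s q = s r → IsCornerEdge q r := by
  rw [qpoly_eq_binaryValue_add (by omega) (by omega), add_eq_left,
    Finset.sum_eq_zero_iff_of_nonpos fun z hz =>
      pairWeight_nonpos ha hb hx₀ hx₁ hκ (mem_coincidentPairs.1 hz).1]
  refine ⟨fun h q r hne hs => ?_, fun h z hz => ?_⟩
  · exact (pairWeight_eq_zero_iff ha hb hx₀ hx₁ hκ hne).1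
      (h (q, r) (mem_coincidentPairs.2 ⟨hne, hs⟩))
  · obtain ⟨hne, hs⟩ := mem_coincidentPairs.1 hz
    exact (pairWeight_eq_zero_iff ha hb hx₀ hx₁ hκ hne).2 (h _ _ hne hs)

lemma nonempty_embedding_plot (ht : a * b ≤ t) : Nonempty (Plot a b ↪ Fin t) :=
  Function.Embedding.nonempty_of_card_le (by simpa using ht)

lemma exists_qpoly_eq_binaryValue (ha : 2 ≤ a) (hb : 2 ≤ b) (ht : a * b ≤ t) :
    ∃ s : BlockArray a b t, ∀ x, qpoly (Bmat (Plot a b)) s x = binaryValue a b t x := by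
  obtain ⟨e⟩ := nonempty_embedding_plot ht
  refine ⟨e, fun x => ?_⟩
  rw [qpoly_eq_binaryValue_add ha hb, coincidentPairs_eq_empty e.injective, Finset.sum_empty,
    add_zero]

lemma exists_disjoint_isCornerEdge (ha : 3 ≤ a) (hb : 3 ≤ b) :
    ∃ u v u' v' : Plot a b, [u, v, u', v'].Nodup ∧ IsCornerEdge u v ∧ IsCornerEdge u' v' := by
  refine ⟨(⟨0, by omega⟩, ⟨0, by omega⟩), (⟨0, by omega⟩, ⟨1, by omega⟩),
    (⟨a - 1, by omega⟩, ⟨b - 1, by omega⟩), (⟨a - 1, by omega⟩, ⟨b - 2, by omega⟩), ?_,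
    ⟨?_, Or.inl ?_⟩, ⟨?_, Or.inl ?_⟩⟩ <;>
  grind [Neighbor, IsCorner]

lemma exists_qpoly_eq_binaryValue_add_cornerWeight (ha : 3 ≤ a) (hb : 3 ≤ b) (ht : a * b ≤ t) :
    ∃ s : BlockArray a b t, ∀ x,
      qpoly (Bmat (Plot a b)) s x = binaryValue a b t x + 4 * cornerWeight (a * b) x := by
  obtain ⟨e⟩ := nonempty_embedding_plot ht
  obtain ⟨u, v, u', v', hnodup, huv, huv'⟩ := exists_disjoint_isCornerEdge ha hb
  simp only [List.nodup_cons, List.mem_cons, List.not_mem_nil, or_false, not_or] at hnodup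
  let merge (q : Plot a b) : Plot a b := if q = v then u else if q = v' then u' else q
  have pairs : coincidentPairs (e ∘ merge) = {(u, v), (v, u), (u', v'), (v', u')} := by
    ext ⟨q, r⟩
    simp only [mem_coincidentPairs, Function.comp_apply, e.injective.eq_iff, merge,
      Finset.mem_insert, Finset.mem_singleton, Prod.mk.injEq]
    grind
  refine ⟨e ∘ merge, fun x => ?_⟩
  rw [qpoly_eq_binaryValue_add (by omega) (by omega), pairs, add_right_inj]
  rw [Finset.sum_insert (by grind), Finset.sum_insert (by grind), Finset.sum_insert (by grind),
    Finset.sum_singleton, pairWeight_of_isCornerEdge ha hb huv,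
    pairWeight_of_isCornerEdge ha hb huv.symm, pairWeight_of_isCornerEdge ha hb huv',
    pairWeight_of_isCornerEdge ha hb huv'.symm]
  ring

lemma qpoly_le_rfun (W : Matrix (Plot a b) (Plot a b) ℝ) (s : BlockArray a b t) (x : ℝ) :
    qpoly W s x ≤ rfun t W x :=
  le_csSup (Set.finite_range _).bddAbove ⟨s, rfl⟩

lemma binaryValue_lt_rfun {x₀ : ℝ} (ha : 3 ≤ a) (hb : 3 ≤ b) (ht : a * b ≤ t) (hx₀ : 0 ≤ x₀)
    (hx₁ : x₀ ≤ ((a : ℝ) * b)⁻¹) (hκ : cornerWeight (a * b) x₀ = 0) (hx : x ≠ x₀) :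
    binaryValue a b t x₀ < rfun t (Bmat (Plot a b)) x := by
  rcases hx.lt_or_gt with hlt | hgt
  · obtain ⟨s, hs⟩ := exists_qpoly_eq_binaryValue (by omega) (by omega) ht
    calc binaryValue a b t x₀ < binaryValue a b t x :=
          strictAntiOn_binaryValue ha hb ht (hlt.le.trans hx₁) hx₁ hlt
      _ ≤ rfun t (Bmat (Plot a b)) x := hs x ▸ qpoly_le_rfun _ s x
  · obtain ⟨s, hs⟩ := exists_qpoly_eq_binaryValue_add_cornerWeight ha hb ht
    calc binaryValue a b t x₀ = binaryValue a b t x₀ + 4 * cornerWeight (a * b) x₀ := by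
          rw [hκ, mul_zero, add_zero]
      _ < binaryValue a b t x + 4 * cornerWeight (a * b) x :=
          strictMonoOn_binaryValue_add_cornerWeight ha hb ht hx₀ (hx₀.trans hgt.le) hgt
      _ ≤ rfun t (Bmat (Plot a b)) x := hs x ▸ qpoly_le_rfun _ s x

lemma binaryValue_of_cornerWeight_eq_zero (ha : a ≠ 0) (hb : b ≠ 0)
    (hκ : cornerWeight (a * b) x = 0) :
    binaryValue a b t x = ((a : ℝ) * b) - (((a : ℝ) * b) + 2) / ((a : ℝ) * b) +
      2 * ((2 * (a : ℝ) + 2 * b - 5) / ((a : ℝ) * b) - 2) * x +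
      (eta a b t - (16 * ((a : ℝ) * b) - 14 * a - 14 * b + 20) / ((a : ℝ) * b)) * x ^ 2 := by
  have hp : (a : ℝ) * b * ((a : ℝ) * b)⁻¹ = 1 := mul_inv_cancel₀ (by positivity)
  rw [cornerWeight] at hκ
  simp only [binaryValue, binaryLead, div_eq_mul_inv]
  linear_combination (-2) * hκ - (8 * x - 1) * hp

end Maximum

theorem optimality_t_ge_p_a_ge_three_general
    (a b t : ℕ) (ha : 3 ≤ a) (hb : 3 ≤ b)
    (xstar ystar : ℝ)
    (hx : xstar = ((2 * ((a : ℝ) * b) - 5) -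
        Real.sqrt ((2 * ((a : ℝ) * b) - 5) ^ 2 - 24)) / 12)
    (hy : ystar = ((a : ℝ) * b) - (((a : ℝ) * b) + 2) / ((a : ℝ) * b) +
        2 * ((2 * (a : ℝ) + 2 * b - 5) / ((a : ℝ) * b) - 2) * xstar +
        (eta a b t - (16 * ((a : ℝ) * b) - 14 * a - 14 * b + 20) / ((a : ℝ) * b)) *
          xstar ^ 2) :
    (∀ s : BlockArray a b t,
       qpoly (Bmat (Plot a b)) s xstar ≤ ystar ∧
       (qpoly (Bmat (Plot a b)) s xstar = ystar ↔
         s ∈ Qset a b t 0 ∪ Qset a b t 1 ∪ Qset a b t 2 ∪ Qset a b t 3 ∪ Qset a b t 4)) ∧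
    (a * b ≤ t → ∀ x : ℝ, x ≠ xstar → ystar < rfun t (Bmat (Plot a b)) x) := by
  have hp : (9 : ℝ) ≤ a * b := mod_cast Nat.mul_le_mul ha hb
  have hx₀ : 0 < xstar := hx ▸ cornerRoot_pos (by linarith)
  have hx₁ : xstar < ((a : ℝ) * b)⁻¹ := hx ▸ cornerRoot_lt_inv (by linarith)
  have hκ : cornerWeight (a * b) xstar = 0 := hx ▸ cornerWeight_cornerRoot (by linarith)
  rw [← binaryValue_of_cornerWeight_eq_zero (by omega) (by omega) hκ] at hy
  subst hy
  refine ⟨fun s => ?_, fun ht x => binaryValue_lt_rfun ha hb ht hx₀.le hx₁.le hκ⟩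
  rw [mem_Qset_union_iff_forall_isCornerEdge]
  exact ⟨qpoly_le_binaryValue ha hb hx₀ hx₁.le hκ s, qpoly_eq_binaryValue_iff ha hb hx₀ hx₁.le hκ s⟩

/-- Theorem `t=p`, case `a ≥ 3`: for `t ≥ p` the quadratics `q_s` are
maximized at `x* = ((2p−5) − √((2p−5)²−24))/12` exactly on `Q₀ ∪ Q₁ ∪ Q₂ ∪ Q₃ ∪ Q₄`. -/
theorem optimality_t_ge_p_a_ge_three
    (a b t : ℕ) (ha : 3 ≤ a) (hab : a ≤ b) (ht : a * b ≤ t)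
    (xstar ystar : ℝ)
    (hx : xstar = ((2 * ((a : ℝ) * b) - 5) -
        Real.sqrt ((2 * ((a : ℝ) * b) - 5) ^ 2 - 24)) / 12)
    (hy : ystar = ((a : ℝ) * b) - (((a : ℝ) * b) + 2) / ((a : ℝ) * b) +
        2 * ((2 * (a : ℝ) + 2 * b - 5) / ((a : ℝ) * b) - 2) * xstar +
        (eta a b t - (16 * ((a : ℝ) * b) - 14 * a - 14 * b + 20) / ((a : ℝ) * b)) *
          xstar ^ 2) :
    (∀ s : BlockArray a b t,
       qpoly (Bmat (Plot a b)) s xstar ≤ ystar ∧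
       (qpoly (Bmat (Plot a b)) s xstar = ystar ↔
         s ∈ Qset a b t 0 ∪ Qset a b t 1 ∪ Qset a b t 2 ∪ Qset a b t 3 ∪ Qset a b t 4)) ∧
    (∀ x : ℝ, x ≠ xstar → ystar < rfun t (Bmat (Plot a b)) x) :=
  (optimality_t_ge_p_a_ge_three_general a b t ha (ha.trans hab) xstar ystar hx hy).imp_right
    fun h => h ht

end TwoDim
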